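/- arXiv:0906.2098 — 2 statements merged into one kernel-verified Lean document; each statement's English description precedes it below -/
import Mathlib

section
/- Let G be a chain graph with chain components 𝒯 and ≺ a consistent strict total order of 𝒯. If the strictly positive joint probability mass function p obeys the multivariate regression Markov property for G, then p factorizes according to the directed acyclic graph of the chain components: p(i) = ∏_{T∈𝒯} p(i_T | i_{pa_D(T)}) for all cells i. -/
open scoped Classical BigOperators

/-- A mixed graph on a node set `V`: a set of directed edges and a symmetric
irreflexive set of undirected edges, the two edge sets being disjoint. -/
structure MixedGraph (V : Type*) where
  dir : V → V → Prop
  undir : V → V → Prop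
  undir_symm : ∀ {a b}, undir a b → undir b a
  undir_irrefl : ∀ a, ¬ undir a a
  edge_disjoint : ∀ a b, dir a b → ¬ undir a b

namespace MixedGraph

variable {V : Type*} [Fintype V] [DecidableEq V] (G : MixedGraph V)

/-- One step of a semi-directed path: an undirected edge or a directed edge
followed in the direction of traversal. -/
def step (a b : V) : Prop := G.dir a b ∨ G.undir a b

/-- No semi-directed cycle: there is no directed edge `a → b` together with a
semi-directed path from `b` back to `a`. -/
def NoSemiDirectedCycle : Prop :=
  ∀ a b : V, G.dir a b → ¬ Relation.ReflTransGen G.step b a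

/-- Two nodes are in the same chain component iff they are joined by a path of
undirected edges (the equivalence relation generated by the undirected part). -/
def sameComp (a b : V) : Prop := Relation.ReflTransGen G.undir a b

/-- The chain component of a node. -/
noncomputable def component (v : V) : Finset V :=
  Finset.univ.filter fun w => G.sameComp v w

/-- `T` is a chain component of `G`. -/
def IsComponent (T : Finset V) : Prop := ∃ v, T = G.component v

/-- The collection of chain components of `G`. -/
noncomputable def componentsF : Finset (Finset V) :=
  Finset.univ.image fun v => G.component v

/-- The parents `pa_G(A)`: nodes outside `A` with a directed edge into `A`. -/
noncomputable def paG (A : Finset V) : Finset V :=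
  Finset.univ.filter fun w => w ∉ A ∧ ∃ v ∈ A, G.dir w v

/-- The (inclusive) neighbours `Nb_G(A)`: `A` together with all nodes joined to
`A` by an undirected edge. -/
noncomputable def nbG (A : Finset V) : Finset V :=
  A ∪ Finset.univ.filter fun w => ∃ v ∈ A, G.undir v w

/-- The edge relation of the directed graph `D` of chain components:
`T₁ → T₂` iff they are distinct chain components and `G` has a directed edge
from a node of `T₁` to a node of `T₂`. -/
def dirD (T₁ T₂ : Finset V) : Prop :=
  G.IsComponent T₁ ∧ G.IsComponent T₂ ∧ T₁ ≠ T₂ ∧ ∃ v ∈ T₁, ∃ w ∈ T₂, G.dir v w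

/-- `pa_D(T)`: the union of the parent components of `T` in `D`. -/
noncomputable def paD (T : Finset V) : Finset V :=
  Finset.univ.filter fun w => G.dirD (G.component w) T

/-- `nd_D(T)`: the union of the components `T'` such that there is no directed
path from `T` to `T'` in `D`. -/
noncomputable def ndD (T : Finset V) : Finset V :=
  Finset.univ.filter fun w => ¬ Relation.ReflTransGen G.dirD T (G.component w)

/-- A set of nodes `A` is connected if the subgraph of the undirected part of
`G` induced by `A` is connected (in particular nonempty). -/
def ConnectedIn (A : Finset V) : Prop :=
  A.Nonempty ∧ ∀ a ∈ A, ∀ b ∈ A,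
    Relation.ReflTransGen (fun x y => x ∈ A ∧ y ∈ A ∧ G.undir x y) a b

/-- The connected component of `v` inside the induced subgraph on `A`. -/
noncomputable def compIn (A : Finset V) (v : V) : Finset V :=
  A.filter fun w =>
    Relation.ReflTransGen (fun x y => x ∈ A ∧ y ∈ A ∧ G.undir x y) v w

/-- The set of connected components of the induced subgraph on `A`. -/
noncomputable def connComps (A : Finset V) : Finset (Finset V) :=
  A.image fun v => G.compIn A v

/-- `ord` is a strict total order of the chain components consistent with `G`:
`ord T T'` implies that `T` is not a parent component of `T'`. -/
def ConsistentOrder (ord : Finset V → Finset V → Prop) : Prop :=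
  (∀ T₁ T₂, G.IsComponent T₁ → G.IsComponent T₂ → T₁ ≠ T₂ →
      ord T₁ T₂ ∨ ord T₂ T₁) ∧
  (∀ T, G.IsComponent T → ¬ ord T T) ∧
  (∀ T₁ T₂ T₃, G.IsComponent T₁ → G.IsComponent T₂ → G.IsComponent T₃ →
      ord T₁ T₂ → ord T₂ T₃ → ord T₁ T₃) ∧
  (∀ T₁ T₂, G.IsComponent T₁ → G.IsComponent T₂ → ord T₁ T₂ → ¬ G.dirD T₁ T₂)

/-- `pre(T)`: the union of all the chain components `T'` with `T ≺ T'`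
(the predecessors, i.e. the past, of `T`). -/
noncomputable def pre (ord : Finset V → Finset V → Prop) (T : Finset V) :
    Finset V :=
  Finset.univ.filter fun w => ord T (G.component w)

end MixedGraph

/-- A cell of the joint contingency table: variable `v` takes one of the
levels `0, …, r v - 1` (level `0` playing the role of the first level `1`). -/
abbrev Cell {V : Type*} (r : V → ℕ) := ∀ v : V, Fin (r v)

variable {V : Type*} [Fintype V] [DecidableEq V] {r : V → ℕ}

/-- The marginal probability `p_S(i_S)` (as a function of a full cell `i`,
depending on it only through the coordinates in `S`). -/
noncomputable def marginal (p : Cell r → ℝ) (S : Finset V) (i : Cell r) : ℝ :=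
  ∑ j : Cell r, if ∀ v ∈ S, j v = i v then p j else 0

/-- The conditional probability `p_{A|B}(i_A | i_B)`. -/
noncomputable def condProb (p : Cell r → ℝ) (A B : Finset V) (i : Cell r) : ℝ :=
  marginal p (A ∪ B) i / marginal p B i

/-- `p` is a strictly positive joint probability mass function. -/
def IsPosPMF (p : Cell r → ℝ) : Prop :=
  (∀ i, 0 < p i) ∧ ∑ i : Cell r, p i = 1

/-- Conditional independence `A ⊥ B | C`. -/
def CondIndep (p : Cell r → ℝ) (A B C : Finset V) : Prop :=
  ∀ i : Cell r,
    marginal p (A ∪ B ∪ C) i * marginal p C i =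
      marginal p (A ∪ C) i * marginal p (B ∪ C) i

/-- The cell agreeing with `i` on `S` and equal to the first (reference)
level outside `S`. -/
def splice (hr : ∀ v, 2 ≤ r v) (S : Finset V) (i : Cell r) : Cell r :=
  fun v => if v ∈ S then i v else ⟨0, by have := hr v; omega⟩

/-- The conditional multivariate logistic contrast
`η^{(A)}(i_A | i_B) = Σ_{s ⊆ A} (−1)^{|A∖s|} log p_{A|B}((i_s, 1_{A∖s}) | i_B)`. -/
noncomputable def mlContrast (hr : ∀ v, 2 ≤ r v) (p : Cell r → ℝ)
    (A B : Finset V) (i : Cell r) : ℝ :=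
  ∑ s ∈ A.powerset,
    (-1 : ℝ) ^ (A \ s).card * Real.log (condProb p A B (splice hr (s ∪ B) i))

/-- The multivariate regression (MR) Markov property for the chain graph `G`
with respect to the consistent ordering `ord`: for every chain component `T`
and every nonempty `A ⊆ T`, (MR1) if `A` is connected then
`A ⊥ (pre(T)∖pa_G(A)) | pa_G(A)`, and (MR2) if `A` is disconnected then its
connected components are mutually independent given `pre(T)`. -/
def MRMarkov (G : MixedGraph V) (ord : Finset V → Finset V → Prop)
    (p : Cell r → ℝ) : Prop :=
  ∀ T : Finset V, G.IsComponent T → ∀ A ⊆ T, A.Nonempty →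
    (G.ConnectedIn A →
      CondIndep p A (G.pre ord T \ G.paG A) (G.paG A)) ∧
    (¬ G.ConnectedIn A →
      ∀ i : Cell r,
        condProb p A (G.pre ord T) i =
          ∏ Aj ∈ G.connComps A, condProb p Aj (G.pre ord T) i)

/-- The block-recursive Markov property of type IV for the chain graph `G`:
(IV0) `T ⊥ (nd_D(T)∖pa_D(T)) | pa_D(T)`;
(IV1) `A ⊥ (pa_D(T)∖pa_G(A)) | pa_G(A)` for all `A ⊆ T`;
(IV2) `A ⊥ (T∖Nb_G(A)) | pa_D(T)` for all connected `A ⊆ T`. -/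
def TypeIVMarkov (G : MixedGraph V) (p : Cell r → ℝ) : Prop :=
  (∀ T : Finset V, G.IsComponent T →
      CondIndep p T (G.ndD T \ G.paD T) (G.paD T)) ∧
  (∀ T : Finset V, G.IsComponent T → ∀ A ⊆ T,
      CondIndep p A (G.paD T \ G.paG A) (G.paG A)) ∧
  (∀ T : Finset V, G.IsComponent T → ∀ A ⊆ T, G.ConnectedIn A →
      CondIndep p A (T \ G.nbG A) (G.paD T))

namespace MixedGraph

theorem sameComp_symm' {V : Type*} (G : MixedGraph V) {a b : V} (h : G.sameComp a b) :
    G.sameComp b a := by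
  unfold sameComp at *
  induction h with
  | refl => exact Relation.ReflTransGen.refl
  | tail _ h2 ih => exact Relation.ReflTransGen.head (G.undir_symm h2) ih

theorem mem_component' {V : Type*} [Fintype V] [DecidableEq V] (G : MixedGraph V) (v w : V) :
    w ∈ G.component v ↔ G.sameComp v w := by
  simp [component]

theorem self_mem_component {V : Type*} [Fintype V] [DecidableEq V] (G : MixedGraph V) (v : V) :
    v ∈ G.component v := (G.mem_component' v v).2 Relation.ReflTransGen.refl

theorem component_eq_of_mem {V : Type*} [Fintype V] [DecidableEq V] (G : MixedGraph V)
    {T : Finset V} (hT : G.IsComponent T) {w : V} (hw : w ∈ T) : G.component w = T := by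
  obtain ⟨v, rfl⟩ := hT
  rw [mem_component'] at hw
  ext x
  rw [mem_component', mem_component']
  exact ⟨fun h => Relation.ReflTransGen.trans hw h,
    fun h => Relation.ReflTransGen.trans (G.sameComp_symm' hw) h⟩

theorem component_connected {V : Type*} [Fintype V] [DecidableEq V] (G : MixedGraph V)
    {T : Finset V} (hT : G.IsComponent T) : G.ConnectedIn T := by
  refine ⟨?_, ?_⟩
  · obtain ⟨v, rfl⟩ := hT
    exact ⟨v, G.self_mem_component v⟩
  · intro a ha b hb
    have hc := G.component_eq_of_mem hT ha
    rw [← hc, mem_component'] at hb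
    unfold sameComp at hb
    induction hb with
    | refl => exact Relation.ReflTransGen.refl
    | @tail x y h1 h2 ih =>
      refine Relation.ReflTransGen.tail ih ⟨?_, ?_, h2⟩
      · rw [← hc, mem_component']; exact h1
      · rw [← hc, mem_component']; exact Relation.ReflTransGen.tail h1 h2

theorem paG_subset_paD {V : Type*} [Fintype V] [DecidableEq V] (G : MixedGraph V)
    {T : Finset V} (hT : G.IsComponent T) : G.paG T ⊆ G.paD T := by
  intro w hw
  simp only [paG, paD, Finset.mem_filter, Finset.mem_univ, true_and] at *
  obtain ⟨hwT, v, hv, hd⟩ := hw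
  refine ⟨⟨w, rfl⟩, hT, ?_, w, G.self_mem_component w, v, hv, hd⟩
  intro h
  exact hwT (h ▸ G.self_mem_component w)

theorem paD_subset_pre {V : Type*} [Fintype V] [DecidableEq V] (G : MixedGraph V)
    {ord : Finset V → Finset V → Prop} (hord : G.ConsistentOrder ord)
    {T : Finset V} (hT : G.IsComponent T) : G.paD T ⊆ G.pre ord T := by
  intro w hw
  simp only [pre, paD, Finset.mem_filter, Finset.mem_univ, true_and] at *
  rcases hord.1 _ _ ⟨w, rfl⟩ hT hw.2.2.1 with h | h
  · exact absurd hw (hord.2.2.2 _ _ ⟨w, rfl⟩ hT h)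
  · exact h

theorem disjoint_pre {V : Type*} [Fintype V] [DecidableEq V] (G : MixedGraph V)
    {ord : Finset V → Finset V → Prop} (hord : G.ConsistentOrder ord)
    {T : Finset V} (hT : G.IsComponent T) {w : V} (hw : w ∈ T) : w ∉ G.pre ord T := by
  simp only [pre, Finset.mem_filter, Finset.mem_univ, true_and]
  rw [G.component_eq_of_mem hT hw]
  exact hord.2.1 T hT

end MixedGraph

theorem marginal_congr {V : Type*} [Fintype V] [DecidableEq V] {r : V → ℕ}
    (p : Cell r → ℝ) (S : Finset V) {i j : Cell r} (h : ∀ v ∈ S, j v = i v) :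
    marginal p S j = marginal p S i := by
  unfold marginal
  refine Finset.sum_congr rfl fun k _ => ?_
  have : (∀ v ∈ S, k v = j v) ↔ (∀ v ∈ S, k v = i v) :=
    forall₂_congr fun v hv => by rw [h v hv]
  simp only [this]

theorem marginal_pos {V : Type*} [Fintype V] [DecidableEq V] {r : V → ℕ}
    {p : Cell r → ℝ} (hp : IsPosPMF p) (S : Finset V) (i : Cell r) :
    0 < marginal p S i := by
  unfold marginal
  refine Finset.sum_pos' (fun j _ => ?_) ⟨i, Finset.mem_univ _, ?_⟩
  · split_ifs
    · exact (hp.1 j).le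
    · exact le_rfl
  · simpa using hp.1 i

theorem marginal_univ {V : Type*} [Fintype V] [DecidableEq V] {r : V → ℕ}
    (p : Cell r → ℝ) (i : Cell r) : marginal p Finset.univ i = p i := by
  unfold marginal
  simp [← funext_iff]

theorem marginal_sum {V : Type*} [Fintype V] [DecidableEq V] {r : V → ℕ}
    (p : Cell r → ℝ) (S D : Finset V) (hSD : ∀ v ∈ S, v ∉ D) (i : Cell r) :
    marginal p S i =
      ∑ j : Cell r, if ∀ v, v ∉ D → j v = i v then marginal p (S ∪ D) j else 0 := by
  unfold marginal
  have h1 : ∀ j : Cell r, (if ∀ v, v ∉ D → j v = i v then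
      (∑ k : Cell r, if ∀ v ∈ S ∪ D, k v = j v then p k else 0) else 0) =
      ∑ k : Cell r, if ((∀ v, v ∉ D → j v = i v) ∧ ∀ v ∈ S ∪ D, k v = j v) then p k else 0 := by
    intro j
    by_cases h : ∀ v, v ∉ D → j v = i v
    · rw [if_pos h]
      refine Finset.sum_congr rfl fun k _ => ?_
      simp only [and_iff_right h]
    · simp only [if_neg h, h, false_and, if_false, Finset.sum_const_zero]
  rw [Finset.sum_congr rfl fun j _ => h1 j, Finset.sum_comm]
  refine Finset.sum_congr rfl fun k _ => ?_
  have h2 : ∀ j : Cell r, ((∀ v, v ∉ D → j v = i v) ∧ ∀ v ∈ S ∪ D, k v = j v) ↔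
      ((∀ v ∈ S, k v = i v) ∧ j = fun v => if v ∈ D then k v else i v) := by
    intro j
    constructor
    · rintro ⟨ha, hb⟩
      refine ⟨fun v hv => ?_, funext fun v => ?_⟩
      · rw [hb v (Finset.mem_union_left _ hv), ha v (hSD v hv)]
      · by_cases hv : v ∈ D
        · simp only [hv, if_true]; exact (hb v (Finset.mem_union_right _ hv)).symm
        · simp only [hv, if_false]; exact ha v hv
    · rintro ⟨ha, rfl⟩
      refine ⟨fun v hv => by simp [hv], fun v hv => ?_⟩
      by_cases hD : v ∈ D
      · simp [hD]
      · have : v ∈ S := by simpa [hD] using hv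
        simp [hD, ha v this]
  simp only [h2]
  by_cases h : ∀ v ∈ S, k v = i v
  · rw [if_pos h]
    simp only [and_iff_right h]
    simp
  · simp [h]

theorem condProb_pre_eq {V : Type*} [Fintype V] [DecidableEq V] {r : V → ℕ}
    (G : MixedGraph V)
    (ord : Finset V → Finset V → Prop) (hord : G.ConsistentOrder ord)
    (p : Cell r → ℝ) (hp : IsPosPMF p) (hMR : MRMarkov G ord p)
    (T : Finset V) (hT : G.IsComponent T) (i : Cell r) :
    condProb p T (G.pre ord T) i = condProb p T (G.paD T) i := by
  have hconn := G.component_connected hT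
  have hCI := (hMR T hT T subset_rfl hconn.1).1 hconn
  have s1 := G.paG_subset_paD hT
  have s2 := G.paD_subset_pre hord hT
  have hdis : ∀ w ∈ T, w ∉ G.pre ord T := fun w hw => G.disjoint_pre hord hT hw
  have hCI' : ∀ j, marginal p (T ∪ G.pre ord T) j * marginal p (G.paG T) j =
      marginal p (T ∪ G.paG T) j * marginal p (G.pre ord T) j := by
    intro j
    have := hCI j
    rwa [Finset.union_assoc, Finset.sdiff_union_of_subset (s1.trans s2)] at this
  set P := G.pre ord T with hP
  set D := P \ G.paD T with hD
  have e1 : T ∪ G.paD T ∪ D = T ∪ P := by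
    rw [Finset.union_assoc, hD, Finset.union_sdiff_of_subset s2]
  have e2 : G.paD T ∪ D = P := by rw [hD, Finset.union_sdiff_of_subset s2]
  have m1 := marginal_sum p (T ∪ G.paD T) D (by
    intro v hv hvD
    rw [hD, Finset.mem_sdiff] at hvD
    rcases Finset.mem_union.1 hv with h | h
    · exact hdis v h hvD.1
    · exact hvD.2 h) i
  have m2 := marginal_sum p (G.paD T) D (by
    intro v hv hvD
    rw [hD, Finset.mem_sdiff] at hvD
    exact hvD.2 hv) i
  rw [e1] at m1
  rw [e2] at m2
  have key : marginal p (T ∪ G.paD T) i * marginal p (G.paG T) i =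
      marginal p (T ∪ G.paG T) i * marginal p (G.paD T) i := by
    rw [m1, m2, Finset.sum_mul, Finset.mul_sum]
    refine Finset.sum_congr rfl fun j _ => ?_
    split_ifs with h
    · rw [← marginal_congr p (G.paG T) (i := i) (j := j),
        ← marginal_congr p (T ∪ G.paG T) (i := i) (j := j)]
      · exact hCI' j
      · intro v hv
        refine h v fun hvD => ?_
        rw [hD, Finset.mem_sdiff] at hvD
        rcases Finset.mem_union.1 hv with h | h
        · exact hdis v h hvD.1
        · exact hvD.2 (s1 h)
      · intro v hv
        refine h v fun hvD => ?_
        rw [hD, Finset.mem_sdiff] at hvD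
        exact hvD.2 (s1 hv)
    · simp
  have k0 := hCI' i
  have a1 := (marginal_pos hp (G.paG T) i).ne'
  have a2 := (marginal_pos hp (G.paD T) i).ne'
  have a3 := (marginal_pos hp P i).ne'
  unfold condProb
  rw [div_eq_div_iff a3 a2]
  apply mul_right_cancel₀ a1
  linear_combination (marginal p (G.paD T) i) * k0 - (marginal p P i) * key

theorem marginal_biUnion {V : Type*} [Fintype V] [DecidableEq V] {r : V → ℕ}
    (G : MixedGraph V)
    (ord : Finset V → Finset V → Prop) (hord : G.ConsistentOrder ord)
    (p : Cell r → ℝ) (hp : IsPosPMF p) (i : Cell r) (s : Finset (Finset V)) :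
    (∀ T ∈ s, G.IsComponent T) →
    (∀ T ∈ s, ∀ T', G.IsComponent T' → ord T T' → T' ∈ s) →
    marginal p (s.biUnion id) i = ∏ T ∈ s, condProb p T (G.pre ord T) i := by
  induction s using Finset.induction_on_max_value (fun T => (G.pre ord T).card) with
  | empty =>
    intro _ _
    simpa [marginal] using hp.2
  | insert a s has hmax ih =>
    intro hc hup
    have hca : G.IsComponent a := hc a (Finset.mem_insert_self _ _)
    have hcs : ∀ T ∈ s, G.IsComponent T := fun T hT => hc T (Finset.mem_insert_of_mem hT)
    have hno : ∀ x ∈ s, ¬ ord x a := by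
      intro x hx hxa
      have hlt : (G.pre ord a).card < (G.pre ord x).card := by
        apply Finset.card_lt_card
        rw [Finset.ssubset_iff_of_subset]
        · obtain ⟨v, rfl⟩ := hca
          refine ⟨v, ?_, G.disjoint_pre hord ⟨v, rfl⟩ (G.self_mem_component v)⟩
          simpa [MixedGraph.pre] using hxa
        · intro w hw
          simp only [MixedGraph.pre, Finset.mem_filter, Finset.mem_univ, true_and] at *
          exact hord.2.2.1 _ _ _ (hcs x hx) hca ⟨w, rfl⟩ hxa hw
      exact absurd (hmax x hx) (not_le.2 hlt)
    have hpre : G.pre ord a = s.biUnion id := by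
      ext w
      simp only [MixedGraph.pre, Finset.mem_filter, Finset.mem_univ, true_and,
        Finset.mem_biUnion, id]
      constructor
      · intro h
        refine ⟨G.component w, ?_, G.self_mem_component w⟩
        rcases Finset.mem_insert.1 (hup a (Finset.mem_insert_self _ _) _ ⟨w, rfl⟩ h) with h' | h'
        · rw [h'] at h
          exact absurd h (hord.2.1 a hca)
        · exact h'
      · rintro ⟨x, hx, hw⟩
        rw [G.component_eq_of_mem (hcs x hx) hw]
        rcases hord.1 a x hca (hcs x hx) (fun h => has (h ▸ hx)) with h | h
        · exact h
        · exact absurd h (hno x hx)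
    have ih' := ih hcs (fun T hT T' hT' ho => by
      rcases Finset.mem_insert.1 (hup T (Finset.mem_insert_of_mem hT) T' hT' ho) with h | h
      · subst h
        exact absurd ho (hno T hT)
      · exact h)
    rw [Finset.prod_insert has, ← ih', Finset.biUnion_insert, ← hpre]
    unfold condProb
    rw [div_mul_cancel₀ _ (marginal_pos hp _ i).ne']
    rfl

/-- Remark 2: a strictly positive joint pmf obeying the
multivariate regression Markov property factorizes according to the directed
acyclic graph of the chain components:
`p(i) = ∏_{T ∈ 𝒯} p(i_T | i_{pa_D(T)})`. -/
theorem mr_markov_factorization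
    {V : Type*} [Fintype V] [DecidableEq V] {r : V → ℕ} (hr : ∀ v, 2 ≤ r v)
    (G : MixedGraph V) (hG : G.NoSemiDirectedCycle)
    (ord : Finset V → Finset V → Prop) (hord : G.ConsistentOrder ord)
    (p : Cell r → ℝ) (hp : IsPosPMF p) (hMR : MRMarkov G ord p) :
    ∀ i : Cell r, p i = ∏ T ∈ G.componentsF, condProb p T (G.paD T) i := by
  intro i
  have h := marginal_biUnion G ord hord p hp i G.componentsF
    (by
      intro T hT
      simp only [MixedGraph.componentsF, Finset.mem_image, Finset.mem_univ, true_and] at hT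
      obtain ⟨v, rfl⟩ := hT
      exact ⟨v, rfl⟩)
    (by
      rintro _ _ _ ⟨v, rfl⟩ _
      simp [MixedGraph.componentsF])
  have hu : G.componentsF.biUnion id = Finset.univ := by
    ext w
    simp only [Finset.mem_biUnion, Finset.mem_univ, iff_true, id]
    exact ⟨G.component w, by simp [MixedGraph.componentsF], G.self_mem_component w⟩
  rw [hu, marginal_univ] at h
  rw [h]
  refine Finset.prod_congr rfl fun T hT => ?_
  simp only [MixedGraph.componentsF, Finset.mem_image, Finset.mem_univ, true_and] at hT
  obtain ⟨v, rfl⟩ := hT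
  exact condProb_pre_eq G ord hord p hp hMR _ ⟨v, rfl⟩ i
end

section
/- Let p be a strictly positive joint probability mass function of the discrete random vector (X_v)_{v∈V}, and let A_1,…,A_r and C be pairwise disjoint subsets of V, with C_j ⊆ C for each j = 1,…,r. If p_{A_1∪⋯∪A_r|C} = ∏_{j=1}^r p_{A_j|C} (mutual conditional independence of A_1,…,A_r given C) and p_{A_j|C} = p_{A_j|C_j} for each j, then, writing A = A_1∪⋯∪A_r and C* = C_1∪⋯∪C_r, one has p_{A|C} = ∏_{j=1}^r p_{A_j|C_j} = p_{A|C*}; in particular A ⊥ (C∖C*) | C*. -/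
open scoped Classical BigOperators

variable {V : Type*} [Fintype V] [DecidableEq V] {r : V → ℕ}

section Helpers

variable {V : Type*} [Fintype V] [DecidableEq V] {r : V → ℕ}

lemma marginal_congr_cell (p : Cell r → ℝ) (S : Finset V) {i j : Cell r}
    (h : ∀ v ∈ S, i v = j v) : marginal p S i = marginal p S j := by
  unfold marginal
  refine Finset.sum_congr rfl fun k _ => ?_
  have : (∀ v ∈ S, k v = i v) ↔ (∀ v ∈ S, k v = j v) :=
    forall₂_congr fun v hv => by rw [h v hv]
  simp only [this]

lemma marginal_pos_of_pmf (p : Cell r → ℝ) (hp : IsPosPMF p) (S : Finset V) (i : Cell r) :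
    0 < marginal p S i := by
  unfold marginal
  refine Finset.sum_pos' (fun k _ => ?_) ⟨i, Finset.mem_univ _, ?_⟩
  · split_ifs
    · exact (hp.1 k).le
    · exact le_rfl
  · simpa using hp.1 i

lemma condProb_congr_cell (p : Cell r → ℝ) (A B : Finset V) {i j : Cell r}
    (h : ∀ v ∈ A ∪ B, i v = j v) : condProb p A B i = condProb p A B j := by
  unfold condProb
  rw [marginal_congr_cell p (A ∪ B) h,
    marginal_congr_cell p B fun v hv => h v (Finset.mem_union_right _ hv)]

lemma marginal_reduce (p : Cell r → ℝ) (hp : IsPosPMF p) (A C D : Finset V)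
    (hAC : Disjoint A C) (hD : D ⊆ C)
    (hg : ∀ i j : Cell r, (∀ v ∈ A ∪ D, i v = j v) → condProb p A C i = condProb p A C j)
    (i : Cell r) :
    marginal p (A ∪ D) i = condProb p A C i * marginal p D i := by
  let c : Cell r → Cell r := fun j v => if v ∈ A then i v else j v
  have hcA : ∀ j, ∀ v ∈ A, c j v = i v := fun j v hv => by simp [c, hv]
  have hcC : ∀ j, ∀ v ∈ C, c j v = j v := fun j v hv => by
    have : v ∉ A := fun h => (Finset.disjoint_left.mp hAC h) hv
    simp [c, this]
  have key : ∀ j : Cell r, (∀ v ∈ D, j v = i v) →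
      condProb p A C i = marginal p (A ∪ C) (c j) / marginal p C j := by
    intro j hj
    rw [hg i (c j), condProb, marginal_congr_cell p C (hcC j)]
    intro v hv
    rcases Finset.mem_union.mp hv with h | h
    · exact (hcA j v h).symm
    · rw [hcC j v (hD h), hj v h]
  have h1 : condProb p A C i * marginal p D i =
      ∑ j : Cell r, ∑ k : Cell r,
        if (∀ v ∈ A ∪ D, k v = i v) ∧ (∀ v ∈ C, j v = k v) then
          p k * p j / marginal p C k else 0 := by
    rw [marginal, Finset.mul_sum]
    refine Finset.sum_congr rfl fun j _ => ?_
    by_cases hj : ∀ v ∈ D, j v = i v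
    · rw [if_pos hj, key j hj, marginal, Finset.sum_div, Finset.sum_mul]
      refine Finset.sum_congr rfl fun k _ => ?_
      by_cases hk : ∀ v ∈ A ∪ C, k v = c j v
      · have hkC : ∀ v ∈ C, j v = k v := fun v hv => by
          rw [hk v (Finset.mem_union_right _ hv), hcC j v hv]
        have hkA : ∀ v ∈ A ∪ D, k v = i v := fun v hv => by
          rcases Finset.mem_union.mp hv with h | h
          · rw [hk v (Finset.mem_union_left _ h), hcA j v h]
          · rw [← hkC v (hD h), hj v h]
        rw [if_pos hk, if_pos ⟨hkA, hkC⟩, marginal_congr_cell p C hkC]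
        ring
      · rw [if_neg hk, if_neg]
        · simp
        · rintro ⟨h1, h2⟩
          apply hk
          intro v hv
          rcases Finset.mem_union.mp hv with h | h
          · rw [hcA j v h, h1 v (Finset.mem_union_left _ h)]
          · rw [hcC j v h, h2 v h]
    · rw [if_neg hj, mul_zero, Finset.sum_eq_zero]
      intro k _
      rw [if_neg]
      rintro ⟨h1, h2⟩
      apply hj
      intro v hv
      rw [h2 v (hD hv), h1 v (Finset.mem_union_right _ hv)]
  rw [h1, Finset.sum_comm, marginal]
  refine Finset.sum_congr rfl fun k _ => ?_
  by_cases hk : ∀ v ∈ A ∪ D, k v = i v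
  · rw [if_pos hk]
    have hpos := marginal_pos_of_pmf p hp C k
    have h2 : ∀ j : Cell r, (if (∀ v ∈ A ∪ D, k v = i v) ∧ (∀ v ∈ C, j v = k v) then
          p k * p j / marginal p C k else 0) =
          (p k / marginal p C k) * (if ∀ v ∈ C, j v = k v then p j else 0) := by
      intro j
      by_cases hj : ∀ v ∈ C, j v = k v
      · rw [if_pos ⟨hk, hj⟩, if_pos hj]; ring
      · rw [if_neg (fun h => hj h.2), if_neg hj, mul_zero]
    rw [Finset.sum_congr rfl fun j _ => h2 j, ← Finset.mul_sum]
    change _ = p k / marginal p C k * marginal p C k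
    field_simp
  · rw [if_neg hk, Finset.sum_eq_zero]
    intro j _
    rw [if_neg fun h => hk h.1]

end Helpers

/-- if `A_1, …, A_r` are mutually conditionally independent
given `C` and `p_{A_j|C} = p_{A_j|C_j}` with `C_j ⊆ C` for each `j`, then with
`A = ∪_j A_j` and `C* = ∪_j C_j` one has
`p_{A|C} = ∏_j p_{A_j|C_j} = p_{A|C*}`; in particular `A ⊥ (C∖C*) | C*`. -/
theorem mutual_indep_reduce_conditioning
    {V : Type*} [Fintype V] [DecidableEq V] {r : V → ℕ} (hr : ∀ v, 2 ≤ r v)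
    (p : Cell r → ℝ) (hp : IsPosPMF p)
    {m : ℕ} (A : Fin m → Finset V) (C : Finset V) (Cs : Fin m → Finset V)
    (hAA : ∀ j k, j ≠ k → Disjoint (A j) (A k))
    (hAC : ∀ j, Disjoint (A j) C)
    (hCs : ∀ j, Cs j ⊆ C)
    (hmut : ∀ i : Cell r,
      condProb p (Finset.univ.biUnion A) C i = ∏ j, condProb p (A j) C i)
    (hred : ∀ j, ∀ i : Cell r,
      condProb p (A j) C i = condProb p (A j) (Cs j) i) :
    (∀ i : Cell r,
      condProb p (Finset.univ.biUnion A) C i =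
        ∏ j, condProb p (A j) (Cs j) i) ∧
    (∀ i : Cell r,
      condProb p (Finset.univ.biUnion A) C i =
        condProb p (Finset.univ.biUnion A) (Finset.univ.biUnion Cs) i) ∧
    CondIndep p (Finset.univ.biUnion A)
      (C \ Finset.univ.biUnion Cs) (Finset.univ.biUnion Cs) := by
  have e1 : ∀ i : Cell r, condProb p (Finset.univ.biUnion A) C i =
      ∏ j, condProb p (A j) (Cs j) i := fun i => by
    rw [hmut i]
    exact Finset.prod_congr rfl fun j _ => hred j i
  have hsub : Finset.univ.biUnion Cs ⊆ C :=
    Finset.biUnion_subset.mpr fun j _ => hCs j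
  have hdis : Disjoint (Finset.univ.biUnion A) C :=
    (Finset.disjoint_biUnion_left _ _ _).mpr fun j _ => hAC j
  have e2 : ∀ i : Cell r, condProb p (Finset.univ.biUnion A) C i =
      condProb p (Finset.univ.biUnion A) (Finset.univ.biUnion Cs) i := fun i => by
    have h := marginal_reduce p hp (Finset.univ.biUnion A) C (Finset.univ.biUnion Cs) hdis hsub
      (fun i j hij => by
        rw [e1 i, e1 j]
        refine Finset.prod_congr rfl fun k _ => condProb_congr_cell p _ _ fun v hv => hij v ?_
        rcases Finset.mem_union.mp hv with h | h
        · exact Finset.mem_union_left _ (Finset.mem_biUnion.mpr ⟨k, Finset.mem_univ _, h⟩)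
        · exact Finset.mem_union_right _ (Finset.mem_biUnion.mpr ⟨k, Finset.mem_univ _, h⟩)) i
    have hpos := marginal_pos_of_pmf p hp (Finset.univ.biUnion Cs) i
    rw [eq_comm, condProb, h, mul_div_assoc, div_self hpos.ne', mul_one]
  refine ⟨e1, e2, fun i => ?_⟩
  have h := e2 i
  have hpos := marginal_pos_of_pmf p hp (Finset.univ.biUnion Cs) i
  have hpos' := marginal_pos_of_pmf p hp C i
  rw [condProb, condProb, div_eq_div_iff hpos'.ne' hpos.ne'] at h
  rw [Finset.union_assoc, Finset.sdiff_union_of_subset hsub]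
  exact h
end
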